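/- For every k ∈ (0,1) and every x ∈ ℝ, one has E(k)·F̃_k(x + 2π) − K(k)·Ẽ_k(x + 2π) = E(k)·F̃_k(x) − K(k)·Ẽ_k(x) + π. -/

import Mathlib

open Real

/-- Complete elliptic integral of the first kind. -/
noncomputable def ellK (k : ℝ) : ℝ :=
  ∫ θ in (0:ℝ)..(π/2), 1 / Real.sqrt (1 - k^2 * Real.sin θ ^ 2)

/-- Complete elliptic integral of the second kind. -/
noncomputable def ellE (k : ℝ) : ℝ :=
  ∫ θ in (0:ℝ)..(π/2), Real.sqrt (1 - k^2 * Real.sin θ ^ 2)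

/-- Complementary complete elliptic integral of the first kind. -/
noncomputable def ellK' (k : ℝ) : ℝ := ellK (Real.sqrt (1 - k^2))

/-- Complementary complete elliptic integral of the second kind. -/
noncomputable def ellE' (k : ℝ) : ℝ := ellE (Real.sqrt (1 - k^2))

/-- The lifted incomplete integral F̃_k. -/
noncomputable def Ftil (k x : ℝ) : ℝ :=
  (1/2) * ∫ s in (0:ℝ)..x, 1 / Real.sqrt (Real.cos (s/2) ^ 2 + k^2 * Real.sin (s/2) ^ 2)

/-- The lifted incomplete integral Ẽ_k. -/
noncomputable def Etil (k x : ℝ) : ℝ :=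
  ((1 - k^2)/2) * ∫ s in (0:ℝ)..x,
    1 / (Real.sqrt (Real.cos (s/2) ^ 2 + k^2 * Real.sin (s/2) ^ 2) + k)


open Set Filter Topology MeasureTheory intervalIntegral

noncomputable def lgD (m t : ℝ) : ℝ := 1 - m * Real.sin t ^ 2
noncomputable def lgK (m : ℝ) : ℝ := ∫ t in (0:ℝ)..(π/2), 1 / Real.sqrt (lgD m t)
noncomputable def lgE (m : ℝ) : ℝ := ∫ t in (0:ℝ)..(π/2), Real.sqrt (lgD m t)
noncomputable def lgJ (m : ℝ) : ℝ := ∫ t in (0:ℝ)..(π/2), 1 / (lgD m t * Real.sqrt (lgD m t))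

lemma lgD_lb {m c : ℝ} (h : m ≤ c) (hc : 0 ≤ c) (t : ℝ) : 1 - c ≤ lgD m t := by
  unfold lgD
  nlinarith [mul_nonneg (sub_nonneg.2 h) (sq_nonneg (Real.sin t)),
    mul_nonneg hc (sub_nonneg.2 (Real.sin_sq_le_one t))]

lemma lgD_pos {m : ℝ} (h : m < 1) (t : ℝ) : 0 < lgD m t := by
  unfold lgD
  nlinarith [mul_nonneg (sub_nonneg.2 h.le) (sq_nonneg (Real.sin t)), Real.sin_sq_le_one t,
    sq_nonneg (Real.sin t)]

lemma lgD_cont (m : ℝ) : Continuous (lgD m) := by unfold lgD; fun_prop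

lemma lgD_sqrt_cont (m : ℝ) : Continuous (fun t => √(lgD m t)) := (lgD_cont m).sqrt

lemma lg_c1 {m : ℝ} (h : m < 1) : Continuous (fun t => 1 / √(lgD m t)) :=
  continuous_const.div (lgD_sqrt_cont m) fun t => (Real.sqrt_pos.2 (lgD_pos h t)).ne'

lemma lg_c3 {m : ℝ} (h : m < 1) : Continuous (fun t => 1 / (lgD m t * √(lgD m t))) :=
  continuous_const.div ((lgD_cont m).mul (lgD_sqrt_cont m)) fun t =>
    (mul_pos (lgD_pos h t) (Real.sqrt_pos.2 (lgD_pos h t))).ne'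

lemma lgD_hasDeriv_m (m t : ℝ) : HasDerivAt (fun m => lgD m t) (-(Real.sin t ^ 2)) m := by
  unfold lgD
  simpa using ((hasDerivAt_id m).mul_const (Real.sin t ^ 2)).const_sub 1

lemma lgD_hasDeriv_t (m t : ℝ) :
    HasDerivAt (fun t => lgD m t) (-(2 * m * Real.sin t * Real.cos t)) t := by
  unfold lgD
  have := (((Real.hasDerivAt_sin t).pow 2).const_mul m).const_sub 1
  refine this.congr_deriv ?_
  norm_num
  try ring

lemma lgE_deriv {m : ℝ} (h0 : 0 < m) (h1 : m < 1) :
    HasDerivAt lgE ((lgE m - lgK m) / (2 * m)) m := by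
  have hs : Iio ((1 + m) / 2) ∈ 𝓝 m := Iio_mem_nhds (by linarith)
  have key := (hasDerivAt_integral_of_dominated_loc_of_deriv_le (μ := volume) (a := 0) (b := π/2)
    (F := fun m t => √(lgD m t)) (F' := fun m t => -(Real.sin t ^ 2) / (2 * √(lgD m t)))
    (x₀ := m) (bound := fun _ => 1 / (2 * √(1 - (1 + m) / 2))) hs
    (Eventually.of_forall fun x => (lgD_sqrt_cont x).aestronglyMeasurable)
    ((lgD_sqrt_cont m).intervalIntegrable _ _)
    (Continuous.aestronglyMeasurable (by
      refine Continuous.div (by fun_prop) (continuous_const.mul (lgD_sqrt_cont m)) fun t => ?_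
      have := Real.sqrt_pos.2 (lgD_pos h1 t)
      positivity))
    (Eventually.of_forall fun t _ x hx => ?_)
    intervalIntegrable_const
    (Eventually.of_forall fun t _ x hx => ?_)).2
  · refine key.congr_deriv ?_
    rw [lgE, lgK, ← integral_sub ((lgD_sqrt_cont m).intervalIntegrable _ _)
      ((lg_c1 h1).intervalIntegrable _ _), ← intervalIntegral.integral_div]
    refine integral_congr fun t _ => ?_
    have hp := Real.sqrt_pos.2 (lgD_pos h1 t)
    have hq := Real.sq_sqrt (lgD_pos h1 t).le
    field_simp
    rw [hq, lgD]; ring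
  · have hx' : x < (1 + m) / 2 := hx
    have hlb := lgD_lb hx'.le (by linarith) t
    have hp : 0 < √(1 - (1 + m) / 2) := Real.sqrt_pos.2 (by linarith)
    have hle := Real.sqrt_le_sqrt hlb
    rw [norm_div, norm_neg, Real.norm_of_nonneg (sq_nonneg _),
      Real.norm_of_nonneg (by positivity)]
    gcongr
    exact Real.sin_sq_le_one t
  · have hx' : x < (1 + m) / 2 := hx
    exact (lgD_hasDeriv_m x t).sqrt (lgD_pos (by linarith) t).ne'

lemma lgK_deriv_aux {m : ℝ} (h0 : -1 < m) (h1 : m < 1) :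
    HasDerivAt lgK (∫ t in (0:ℝ)..(π/2), Real.sin t ^ 2 / (2 * (lgD m t * √(lgD m t)))) m := by
  have hs : Iio ((1 + m) / 2) ∈ 𝓝 m := Iio_mem_nhds (by linarith)
  have hm : ∀ᶠ x in 𝓝 m, x < 1 := Iio_mem_nhds h1
  refine (hasDerivAt_integral_of_dominated_loc_of_deriv_le (μ := volume) (a := 0) (b := π/2)
    (F := fun m t => 1 / √(lgD m t))
    (F' := fun m t => Real.sin t ^ 2 / (2 * (lgD m t * √(lgD m t))))
    (x₀ := m) (bound := fun _ => 1 / (2 * ((1 - (1 + m) / 2) * √(1 - (1 + m) / 2)))) hs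
    (hm.mono fun x hx => (lg_c1 hx).aestronglyMeasurable)
    ((lg_c1 h1).intervalIntegrable _ _)
    (Continuous.aestronglyMeasurable (by
      refine Continuous.div (by fun_prop)
        (continuous_const.mul ((lgD_cont m).mul (lgD_sqrt_cont m))) fun t => ?_
      have := Real.sqrt_pos.2 (lgD_pos h1 t)
      have := lgD_pos h1 t
      positivity))
    (Eventually.of_forall fun t _ x hx => ?_)
    intervalIntegrable_const
    (Eventually.of_forall fun t _ x hx => ?_)).2
  · have hx' : x < (1 + m) / 2 := hx
    have hlb := lgD_lb hx'.le (by linarith) t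
    have hp0 : 0 < 1 - (1 + m) / 2 := by linarith
    have hp : 0 < √(1 - (1 + m) / 2) := Real.sqrt_pos.2 hp0
    have hD : 0 < lgD x t := by linarith
    have hle := Real.sqrt_le_sqrt hlb
    rw [norm_div, Real.norm_of_nonneg (sq_nonneg _),
      Real.norm_of_nonneg (by positivity)]
    gcongr
    exact Real.sin_sq_le_one t
  · have hx' : x < (1 + m) / 2 := hx
    have hD : 0 < lgD x t := lgD_pos (by linarith) t
    have hp := Real.sqrt_pos.2 hD
    have hq := Real.sq_sqrt hD.le
    have := ((lgD_hasDeriv_m x t).sqrt hD.ne').inv hp.ne'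
    simp only [one_div]
    refine this.congr_deriv ?_
    rw [hq]
    field_simp

lemma lgJ_eq {m : ℝ} (h1 : m < 1) : (1 - m) * lgJ m = lgE m := by
  have key := integral_eq_sub_of_hasDerivAt (a := 0) (b := π/2)
    (f := fun t => m * (Real.sin t * Real.cos t / √(lgD m t)))
    (f' := fun t => √(lgD m t) - (1 - m) * (1 / (lgD m t * √(lgD m t)))) (fun t _ => ?_)
    (((lgD_sqrt_cont m).sub (continuous_const.mul (lg_c3 h1))).intervalIntegrable _ _)
  · rw [integral_sub ((lgD_sqrt_cont m).intervalIntegrable _ _)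
      (((lg_c3 h1).intervalIntegrable _ _).const_mul (1 - m)),
      intervalIntegral.integral_const_mul] at key
    simp only [Real.sin_zero, Real.cos_pi_div_two, zero_mul, mul_zero, zero_div, sub_zero] at key
    simp only [lgJ, lgE]
    linarith
  · have hD : 0 < lgD m t := lgD_pos h1 t
    have hp := Real.sqrt_pos.2 hD
    have hq := Real.sq_sqrt hD.le
    have := ((((Real.hasDerivAt_sin t).mul (Real.hasDerivAt_cos t)).div
      ((lgD_hasDeriv_t m t).sqrt hD.ne') hp.ne').const_mul m)
    refine this.congr_deriv ?_
    have hsc := Real.sin_sq_add_cos_sq t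
    have hc : Real.cos t ^ 2 = 1 - Real.sin t ^ 2 := by linarith
    have hDs : lgD m t = 1 - m * Real.sin t ^ 2 := rfl
    generalize √(lgD m t) = r at *
    rw [← hq] at hDs ⊢
    simp only [Pi.mul_apply]
    field_simp
    have hr4 : r ^ 4 = (1 - m * Real.sin t ^ 2) ^ 2 := by rw [← hDs]; ring
    ring_nf
    simp only [hr4, hDs, hc]
    ring

lemma lgK_deriv {m : ℝ} (h0 : 0 < m) (h1 : m < 1) :
    HasDerivAt lgK ((lgE m - (1 - m) * lgK m) / (2 * m * (1 - m))) m := by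
  refine (lgK_deriv_aux (by linarith) h1).congr_deriv ?_
  have : (∫ t in (0:ℝ)..(π/2), Real.sin t ^ 2 / (2 * (lgD m t * √(lgD m t))))
      = (lgJ m - lgK m) / (2 * m) := by
    rw [lgJ, lgK, ← integral_sub ((lg_c3 h1).intervalIntegrable _ _)
      ((lg_c1 h1).intervalIntegrable _ _), ← intervalIntegral.integral_div]
    refine integral_congr fun t _ => ?_
    have hD : 0 < lgD m t := lgD_pos h1 t
    have hp := Real.sqrt_pos.2 hD
    field_simp
    rw [lgD]; ring
  rw [this, ← lgJ_eq h1]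
  have : 0 < 1 - m := by linarith
  field_simp

noncomputable def lgL (m : ℝ) : ℝ := lgE m * lgK (1 - m) + lgK m * lgE (1 - m) - lgK m * lgK (1 - m)

lemma lgL_deriv {m : ℝ} (h0 : 0 < m) (h1 : m < 1) : HasDerivAt lgL 0 m := by
  have e1 := lgE_deriv h0 h1
  have k1 := lgK_deriv h0 h1
  have hsub : HasDerivAt (fun m : ℝ => 1 - m) (-1) m := by
    simpa using (hasDerivAt_id m).const_sub 1
  have e2 := (lgE_deriv (m := 1 - m) (by linarith) (by linarith)).comp m hsub
  have k2 := (lgK_deriv (m := 1 - m) (by linarith) (by linarith)).comp m hsub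
  have := ((e1.mul k2).add (k1.mul e2)).sub (k1.mul k2)
  refine HasDerivAt.congr_deriv (f := lgL) this ?_
  have : 0 < 1 - m := by linarith
  simp only [Function.comp]
  have h2 : 1 - (1 - m) = m := by ring
  rw [h2]
  field_simp
  ring

lemma lgE_cont : Continuous lgE := by
  unfold lgE
  refine continuous_parametric_intervalIntegral_of_continuous' ?_ _ _
  unfold lgD Function.uncurry
  fun_prop

lemma lgK_bd {m : ℝ} (h0 : 0 < m) (h1 : m < 1) : lgK (1 - m) ≤ (π / 2) / √m := by
  have : lgK (1 - m) ≤ ∫ t in (0:ℝ)..(π/2), 1 / √m := by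
    refine integral_mono_on (by positivity) ((lg_c1 (by linarith)).intervalIntegrable _ _)
      intervalIntegrable_const fun t _ => ?_
    have := lgD_lb (le_refl (1 - m)) (by linarith) t
    have hp := Real.sqrt_pos.2 h0
    have := Real.sqrt_le_sqrt (show m ≤ lgD (1 - m) t by linarith)
    gcongr
  refine this.trans (le_of_eq ?_)
  simp
  ring

lemma lgK_nonneg (m : ℝ) : 0 ≤ lgK m :=
  integral_nonneg (by positivity) fun t _ => by positivity

lemma lgKE {m : ℝ} (h0 : 0 < m) (h1 : m < 1) : 0 ≤ lgK m - lgE m ∧ lgK m - lgE m ≤ m * lgK m := by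
  have heq : ∀ t, 1 / √(lgD m t) - √(lgD m t) = m * Real.sin t ^ 2 * (1 / √(lgD m t)) := by
    intro t
    have hD : 0 < lgD m t := lgD_pos h1 t
    have hp := Real.sqrt_pos.2 hD
    have hq := Real.sq_sqrt hD.le
    field_simp
    rw [hq, lgD]; ring
  have hi := ((lg_c1 h1).intervalIntegrable (μ := volume) 0 (π/2))
  have hj := ((lgD_sqrt_cont m).intervalIntegrable (μ := volume) 0 (π/2))
  constructor
  · rw [lgK, lgE, ← integral_sub hi hj]
    refine integral_nonneg (by positivity) fun t _ => ?_
    rw [heq]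
    positivity
  · rw [lgK, lgE, ← integral_sub hi hj, ← intervalIntegral.integral_const_mul]
    refine integral_mono_on (by positivity) (hi.sub hj) (hi.const_mul m) fun t _ => ?_
    rw [heq]
    have := Real.sin_sq_le_one t
    have : m * Real.sin t ^ 2 ≤ m := by nlinarith
    gcongr

lemma lgK_zero : lgK 0 = π / 2 := by simp [lgK, lgD]

lemma lgE_one : lgE 1 = 1 := by
  have : lgE 1 = ∫ t in (0:ℝ)..(π/2), Real.cos t := by
    refine integral_congr fun t ht => ?_
    rw [uIcc_of_le (by positivity)] at ht
    have hc : 0 ≤ Real.cos t := Real.cos_nonneg_of_mem_Icc ⟨by linarith [ht.1, Real.pi_pos], ht.2⟩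
    simp only [lgD]
    rw [one_mul, ← Real.cos_sq', Real.sqrt_sq hc]
  rw [this]; simp

lemma lgL_tendsto : Tendsto lgL (𝓝[>] 0) (𝓝 (π / 2)) := by
  have hK : Tendsto lgK (𝓝[>] 0) (𝓝 (π / 2)) := by
    rw [← lgK_zero]
    exact (lgK_deriv_aux (m := 0) (by norm_num) (by norm_num)).continuousAt.tendsto.mono_left
      nhdsWithin_le_nhds
  have hE : Tendsto (fun m => lgE (1 - m)) (𝓝[>] 0) (𝓝 1) := by
    have : Continuous fun m => lgE (1 - m) := lgE_cont.comp (by fun_prop)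
    have h := this.tendsto 0
    simp only [sub_zero, lgE_one] at h
    exact h.mono_left nhdsWithin_le_nhds
  have hS : Tendsto (fun m : ℝ => √m) (𝓝[>] 0) (𝓝 0) := by
    have h := Real.continuous_sqrt.tendsto 0
    rw [Real.sqrt_zero] at h
    exact h.mono_left nhdsWithin_le_nhds
  have hB : Tendsto (fun m => √m * lgK m * (π / 2)) (𝓝[>] 0) (𝓝 0) := by
    simpa using (hS.mul hK).mul_const (π / 2)
  have hev : ∀ᶠ m : ℝ in 𝓝[>] 0, m ∈ Ioo (0:ℝ) 1 := Ioo_mem_nhdsGT (by norm_num)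
  have hP : Tendsto (fun m => (lgK m - lgE m) * lgK (1 - m)) (𝓝[>] 0) (𝓝 0) := by
    refine squeeze_zero' (hev.mono fun m hm => ?_) (hev.mono fun m hm => ?_) hB
    · exact mul_nonneg (lgKE hm.1 hm.2).1 (lgK_nonneg _)
    · have hp := Real.sqrt_pos.2 hm.1
      calc (lgK m - lgE m) * lgK (1 - m) ≤ (m * lgK m) * ((π / 2) / √m) :=
            mul_le_mul (lgKE hm.1 hm.2).2 (lgK_bd hm.1 hm.2) (lgK_nonneg _)
              (mul_nonneg hm.1.le (lgK_nonneg _))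
        _ = √m * lgK m * (π / 2) := by
            have hq := Real.sq_sqrt hm.1.le
            field_simp
            rw [hq, mul_comm]
  have := (hK.mul hE).sub hP
  simp only [mul_one, sub_zero] at this
  refine this.congr fun m => ?_
  unfold lgL; ring

lemma legendre {m : ℝ} (hm : m ∈ Ioo (0:ℝ) 1) : lgL m = π / 2 := by
  have hc : ∀ x ∈ Ioo (0:ℝ) 1, lgL x = lgL m := fun x hx =>
    isOpen_Ioo.is_const_of_deriv_eq_zero isPreconnected_Ioo
      (fun y hy => (lgL_deriv hy.1 hy.2).differentiableAt.differentiableWithinAt)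
      (fun y hy => (lgL_deriv hy.1 hy.2).deriv) hx hm
  have hev : ∀ᶠ x : ℝ in 𝓝[>] 0, x ∈ Ioo (0:ℝ) 1 := Ioo_mem_nhdsGT (by norm_num)
  have : Tendsto lgL (𝓝[>] 0) (𝓝 (lgL m)) :=
    tendsto_const_nhds.congr' (hev.mono fun x hx => (hc x hx).symm)
  exact tendsto_nhds_unique this lgL_tendsto

lemma lg_period {f : ℝ → ℝ} (hf : Continuous f) (hp : ∀ t, f (t + π) = f t)
    (hr : ∀ t, f (π - t) = f t) (x : ℝ) :
    ∫ s in x..(x + 2 * π), f (s / 2) = 4 * ∫ t in (0:ℝ)..(π/2), f t := by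
  rw [intervalIntegral.integral_comp_div (f := f) (by norm_num : (2:ℝ) ≠ 0)]
  have h1 : (x + 2 * π) / 2 = x / 2 + π := by ring
  rw [h1, (show Function.Periodic f π from hp).intervalIntegral_add_eq (x / 2) 0, zero_add,
    ← integral_add_adjacent_intervals (hf.intervalIntegrable 0 (π/2))
      (hf.intervalIntegrable (π/2) π)]
  have h2 : ∫ t in (π/2)..π, f t = ∫ t in (0:ℝ)..(π/2), f t := by
    have := intervalIntegral.integral_comp_sub_left (a := 0) (b := π/2) f π
    simp only [hr, sub_zero] at this
    rw [this]
    congr 1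
    ring
  rw [h2, smul_eq_mul]
  ring

lemma lgD_add (m t : ℝ) : lgD m (t + π) = lgD m t := by simp [lgD, Real.sin_add_pi]
lemma lgD_refl (m t : ℝ) : lgD m (π - t) = lgD m t := by simp [lgD, Real.sin_pi_sub]

lemma lg_second {k : ℝ} (hk : k ∈ Ioo (0:ℝ) 1) :
    (1 - k ^ 2) * ∫ t in (0:ℝ)..(π/2), 1 / (√(lgD (1 - k ^ 2) t) + k)
      = lgK (1 - k ^ 2) - lgE (1 - k ^ 2) := by
  have hk0 := hk.1
  have h1 : 1 - k ^ 2 < 1 := by nlinarith [hk.1]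
  have hc : Continuous (fun t => 1 / (√(lgD (1 - k ^ 2) t) + k)) :=
    continuous_const.div ((lgD_sqrt_cont _).add continuous_const) fun t => by positivity
  have key := integral_eq_sub_of_hasDerivAt (a := 0) (b := π/2)
    (f := fun t => (1 - k ^ 2) * (Real.sin t * Real.cos t / (√(lgD (1 - k ^ 2) t) + k)))
    (f' := fun t => (1 - k ^ 2) * (1 / (√(lgD (1 - k ^ 2) t) + k))
      - (1 / √(lgD (1 - k ^ 2) t) - √(lgD (1 - k ^ 2) t))) (fun t _ => ?_)
    (((continuous_const.mul hc).sub ((lg_c1 h1).sub (lgD_sqrt_cont _))).intervalIntegrable _ _)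
  · have hi1 : IntervalIntegrable (fun t => 1 / √(lgD (1 - k ^ 2) t) - √(lgD (1 - k ^ 2) t))
        volume 0 (π/2) := ((lg_c1 h1).sub (lgD_sqrt_cont _)).intervalIntegrable _ _
    rw [integral_sub ((hc.intervalIntegrable _ _).const_mul (1 - k ^ 2)) hi1,
      integral_sub ((lg_c1 h1).intervalIntegrable _ _) ((lgD_sqrt_cont _).intervalIntegrable _ _),
      intervalIntegral.integral_const_mul] at key
    simp only [Real.sin_zero, Real.cos_pi_div_two, zero_mul, mul_zero, zero_div, sub_zero] at key
    simp only [lgK, lgE]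
    linarith
  · have hD : 0 < lgD (1 - k ^ 2) t := lgD_pos h1 t
    have hp := Real.sqrt_pos.2 hD
    have hq := Real.sq_sqrt hD.le
    have := ((((Real.hasDerivAt_sin t).mul (Real.hasDerivAt_cos t)).div
      (((lgD_hasDeriv_t (1 - k ^ 2) t).sqrt hD.ne').add_const k) (by positivity)).const_mul
        (1 - k ^ 2))
    refine this.congr_deriv ?_
    have hsc := Real.sin_sq_add_cos_sq t
    have hc : Real.cos t ^ 2 = 1 - Real.sin t ^ 2 := by linarith
    have hDs : lgD (1 - k ^ 2) t = 1 - (1 - k ^ 2) * Real.sin t ^ 2 := rfl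
    generalize √(lgD (1 - k ^ 2) t) = r at *
    rw [← hq] at hDs
    simp only [Pi.mul_apply]
    field_simp
    have hr4 : r ^ 4 = (1 - (1 - k ^ 2) * Real.sin t ^ 2) ^ 2 := by rw [← hDs]; ring
    have hr3 : r ^ 3 = r * (1 - (1 - k ^ 2) * Real.sin t ^ 2) := by rw [← hDs]; ring
    ring_nf
    ring_nf at hr4 hr3 hDs
    simp only [hr4, hr3, hDs, hc]
    ring

theorem stmt_10 (k : ℝ) (hk : k ∈ Set.Ioo (0:ℝ) 1) (x : ℝ) :
    ellE k * Ftil k (x + 2*π) - ellK k * Etil k (x + 2*π)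
      = ellE k * Ftil k x - ellK k * Etil k x + π := by
  have hk0 := hk.1
  have h1 : 1 - k ^ 2 < 1 := by nlinarith [hk.1]
  have hD : ∀ s : ℝ, Real.cos (s/2) ^ 2 + k^2 * Real.sin (s/2) ^ 2 = lgD (1 - k ^ 2) (s / 2) := by
    intro s
    rw [lgD, Real.cos_sq']; ring
  have hc : Continuous (fun t => 1 / (√(lgD (1 - k ^ 2) t) + k)) :=
    continuous_const.div ((lgD_sqrt_cont _).add continuous_const) fun t => by positivity
  have hF : Ftil k (x + 2 * π) = Ftil k x + 2 * lgK (1 - k ^ 2) := by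
    have := lg_period (lg_c1 h1) (fun t => by rw [lgD_add]) (fun t => by rw [lgD_refl]) x
    have hi : Continuous (fun s : ℝ => 1 / √(lgD (1 - k ^ 2) (s / 2))) :=
      (lg_c1 h1).comp (continuous_id.div_const 2)
    simp only [Ftil, hD]
    rw [← integral_add_adjacent_intervals (hi.intervalIntegrable 0 x) (hi.intervalIntegrable _ _),
      this, lgK]
    ring
  have hE : Etil k (x + 2 * π) = Etil k x + 2 * (lgK (1 - k ^ 2) - lgE (1 - k ^ 2)) := by
    have := lg_period hc (fun t => by rw [lgD_add]) (fun t => by rw [lgD_refl]) x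
    have hi : Continuous (fun s : ℝ => 1 / (√(lgD (1 - k ^ 2) (s / 2)) + k)) :=
      hc.comp (continuous_id.div_const 2)
    simp only [Etil, hD]
    rw [← integral_add_adjacent_intervals (hi.intervalIntegrable 0 x) (hi.intervalIntegrable _ _),
      this, ← lg_second hk]
    ring
  have hL := legendre (m := k ^ 2) ⟨by positivity, by nlinarith [hk.1, hk.2]⟩
  have e1 : ellE k = lgE (k ^ 2) := rfl
  have e2 : ellK k = lgK (k ^ 2) := rfl
  rw [hF, hE, e1, e2]
  unfold lgL at hL
  linear_combination 2 * hL
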